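/- Let n ≥ 2 and let w : Fin n → ℚ be a nontrivial weighting vector, i.e., w is not a rational multiple of the all-ones vector plus the zero adjustment (there is no β with w = β·𝟙). Then T_w is recoverable from the pairs map P — i.e., there exists a ℚ-linear map R : (Fin n × Fin n → ℚ) → (Fin n → ℚ) with T_w(p) = R(P(p)) for every profile p — if and only if there exist rationals α ≠ 0 and β with w = α·b + β·𝟙, where b(j) = n − 1 − j is the Borda weighting vector (equivalently, w or −w is equivalent to the Borda count). -/

import Mathlib

/-- The positional voting map `T_w` as a `ℚ`-linear map. -/
noncomputable def positionalMap (n : ℕ) (w : Fin n → ℚ) :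
    (Equiv.Perm (Fin n) → ℚ) →ₗ[ℚ] (Fin n → ℚ) where
  toFun p := fun c => ∑ σ : Equiv.Perm (Fin n), p σ * w (σ⁻¹ c)
  map_add' p q := by funext c; simp [add_mul, Finset.sum_add_distrib]
  map_smul' a p := by funext c; simp [Finset.mul_sum, mul_assoc]

/-- The pairs map `P` as a `ℚ`-linear map: `P(p)(c, d)` is the total weight of
ballots ranking `c` above `d` (and `P(p)(c, c) = 0`, since no ballot ranks `c`
strictly above itself). -/
noncomputable def pairsMap (n : ℕ) :
    (Equiv.Perm (Fin n) → ℚ) →ₗ[ℚ] (Fin n × Fin n → ℚ) where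
  toFun p := fun cd =>
    ∑ σ ∈ Finset.univ.filter (fun σ : Equiv.Perm (Fin n) => σ⁻¹ cd.1 < σ⁻¹ cd.2), p σ
  map_add' p q := by funext cd; simp [Finset.sum_add_distrib]
  map_smul' a p := by funext cd; simp [Finset.mul_sum]

/-!
Swapping two adjacent positions `a ⋖ b` of a ballot changes its pairs vector only in the two
entries of the candidates `c`, `d` standing there, by `single (c, d) 1 - single (d, c) 1`, whatever
`a` and `b` are, while the score of `c` under `T_w` changes by `w a - w b`. Hence if `T_w` factors
through `P`, all adjacent gaps of `w` coincide and `w` is affine in the position. Conversely, the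
Borda score of `c` is the number of candidates beaten by `c`, that is `∑ d, P(p)(c, d)`, and the
total number of ballots is `P(p)(c, d) + P(p)(d, c)` for any `c ≠ d`.
-/

section Recoverable

variable {K U V W : Type*} [Semiring K] [AddCommMonoid U] [AddCommMonoid V] [AddCommMonoid W]
  [Module K U] [Module K V] [Module K W]

/-- The linear map `S` is recoverable from `T` if it factors linearly through `T`. -/
def Recoverable (S : U →ₗ[K] W) (T : U →ₗ[K] V) : Prop :=
  ∃ R : V →ₗ[K] W, S = R ∘ₗ T

namespace Recoverable

variable {S₁ S₂ : U →ₗ[K] W} {T : U →ₗ[K] V}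

lemma add (h₁ : Recoverable S₁ T) (h₂ : Recoverable S₂ T) : Recoverable (S₁ + S₂) T := by
  obtain ⟨R₁, rfl⟩ := h₁
  obtain ⟨R₂, rfl⟩ := h₂
  exact ⟨R₁ + R₂, (LinearMap.add_comp T R₂ R₁).symm⟩

lemma smul {M : Type*} [Monoid M] [DistribMulAction M W] [SMulCommClass K M W] (k : M)
    (h : Recoverable S₁ T) : Recoverable (k • S₁) T := by
  obtain ⟨R, rfl⟩ := h
  exact ⟨k • R, (LinearMap.smul_comp k R T).symm⟩

end Recoverable

end Recoverable

lemma swap_lt_swap_iff_of_covBy {α : Type*} [LinearOrder α] {a b : α} (hab : a ⋖ b) (u v : α) :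
    Equiv.swap a b u < Equiv.swap a b v ↔ u < v ∧ ¬(u = a ∧ v = b) ∨ u = b ∧ v = a := by
  have hlt := hab.lt
  have hgap (x : α) : x ≤ a ∨ b ≤ x := (le_or_gt x a).imp_right hab.ge_of_gt
  grind [hgap u, hgap v]

lemma exists_perm_apply_eq_and_apply_eq {α : Type*} {a b c d : α} (hab : a ≠ b) (hcd : c ≠ d) :
    ∃ σ : Equiv.Perm α, σ a = c ∧ σ b = d :=
  MulAction.is_two_pretransitive_iff.mp
    (Equiv.Perm.isMultiplyPretransitive α 2) hab hcd

lemma eq_sub_nsmul_of_castSucc_sub_succ_eq {G : Type*} [AddCommGroup G] {n : ℕ}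
    {f : Fin (n + 1) → G} {δ : G} (hf : ∀ i : Fin n, f i.castSucc - f i.succ = δ)
    (j : Fin (n + 1)) : f j = f 0 - (j : ℕ) • δ := by
  induction j using Fin.induction with
  | zero => simp
  | succ i ih =>
    calc f i.succ = f i.castSucc - δ := by rw [← hf i, sub_sub_cancel]
      _ = f 0 - (i.succ : ℕ) • δ := by rw [ih, Fin.val_castSucc, Fin.val_succ, succ_nsmul, sub_sub]

/-- The weighting vector `b` of the Borda count; the subtraction takes place in `ℚ`. -/
def bordaWeight (n : ℕ) : Fin n → ℚ :=
  fun j => (n : ℚ) - 1 - ((j : ℕ) : ℚ)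

section Voting

variable {n : ℕ}

lemma card_Ioi_eq_bordaWeight (j : Fin n) : ((Finset.Ioi j).card : ℚ) = bordaWeight n j := by
  rw [Fin.card_Ioi, Nat.sub_sub, Nat.cast_sub (by lia), bordaWeight]
  push_cast
  ring

lemma positionalMap_apply (w : Fin n → ℚ) (p : Equiv.Perm (Fin n) → ℚ) (c : Fin n) :
    positionalMap n w p c = ∑ σ, p σ * w (σ⁻¹ c) :=
  rfl

lemma pairsMap_apply (p : Equiv.Perm (Fin n) → ℚ) (c d : Fin n) :
    pairsMap n p (c, d) = ∑ σ, if σ⁻¹ c < σ⁻¹ d then p σ else 0 :=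
  Finset.sum_filter _ _

lemma positionalMap_add (w x : Fin n → ℚ) :
    positionalMap n (w + x) = positionalMap n w + positionalMap n x := by
  refine LinearMap.ext fun p => funext fun c => ?_
  simp [positionalMap_apply, mul_add, Finset.sum_add_distrib]

lemma positionalMap_smul (k : ℚ) (w : Fin n → ℚ) :
    positionalMap n (k • w) = k • positionalMap n w := by
  refine LinearMap.ext fun p => funext fun c => ?_
  simp [positionalMap_apply, Finset.mul_sum, mul_left_comm]

lemma positionalMap_single (w : Fin n → ℚ) (σ : Equiv.Perm (Fin n)) (c : Fin n) :
    positionalMap n w (Pi.single σ 1) c = w (σ⁻¹ c) := by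
  simp [positionalMap_apply, Pi.single_apply]

lemma pairsMap_single (σ : Equiv.Perm (Fin n)) (c d : Fin n) :
    pairsMap n (Pi.single σ 1) (c, d) = if σ⁻¹ c < σ⁻¹ d then 1 else 0 := by
  rw [pairsMap_apply, Finset.sum_eq_single σ, Pi.single_eq_same]
  · simp +contextual
  · simp

lemma positionalMap_bordaWeight_apply (p : Equiv.Perm (Fin n) → ℚ) (c : Fin n) :
    positionalMap n (bordaWeight n) p c = ∑ d, pairsMap n p (c, d) := by
  have beaten_by (σ : Equiv.Perm (Fin n)) :
      ∑ d, (if σ⁻¹ c < σ⁻¹ d then p σ else 0) = p σ * bordaWeight n (σ⁻¹ c) := by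
    rw [Equiv.sum_comp σ⁻¹ fun j => if σ⁻¹ c < j then p σ else 0, ← Finset.sum_filter,
      Finset.filter_lt_eq_Ioi, Finset.sum_const, nsmul_eq_mul, card_Ioi_eq_bordaWeight, mul_comm]
  simp_rw [positionalMap_apply, pairsMap_apply]
  rw [Finset.sum_comm]
  exact Finset.sum_congr rfl fun σ _ => (beaten_by σ).symm

lemma pairsMap_add_pairsMap_swap (p : Equiv.Perm (Fin n) → ℚ) {c d : Fin n} (hcd : c ≠ d) :
    pairsMap n p (c, d) + pairsMap n p (d, c) = ∑ σ, p σ := by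
  simp_rw [pairsMap_apply, ← Finset.sum_add_distrib]
  refine Finset.sum_congr rfl fun σ _ => ?_
  rcases (σ⁻¹.injective.ne hcd).lt_or_gt with h | h <;>
    simp only [h, h.not_gt, if_true, if_false, add_zero, zero_add]

lemma recoverable_positionalMap_bordaWeight :
    Recoverable (positionalMap n (bordaWeight n)) (pairsMap n) :=
  ⟨LinearMap.pi fun c => ∑ d, LinearMap.proj (c, d), LinearMap.ext fun p => funext fun c => by
    simp [positionalMap_bordaWeight_apply]⟩

lemma recoverable_positionalMap_one [Nontrivial (Fin n)] :
    Recoverable (positionalMap n 1) (pairsMap n) := by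
  obtain ⟨c, d, hcd⟩ := exists_pair_ne (Fin n)
  let totalWeight : (Fin n × Fin n → ℚ) →ₗ[ℚ] ℚ :=
    LinearMap.proj (R := ℚ) (φ := fun _ => ℚ) (c, d) + LinearMap.proj (d, c)
  refine ⟨LinearMap.pi fun _ => totalWeight, LinearMap.ext fun p => funext fun e => ?_⟩
  simp [totalWeight, positionalMap_apply, pairsMap_add_pairsMap_swap p hcd]

lemma positionalMap_single_sub_single_mul_swap (w : Fin n → ℚ) (σ : Equiv.Perm (Fin n))
    (a b : Fin n) :
    positionalMap n w (Pi.single σ 1 - Pi.single (σ * Equiv.swap a b) 1) (σ a) = w a - w b := by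
  simp [positionalMap_single]

lemma pairsMap_single_sub_single_mul_swap (σ : Equiv.Perm (Fin n)) {a b : Fin n} (hab : a ⋖ b) :
    pairsMap n (Pi.single σ 1 - Pi.single (σ * Equiv.swap a b) 1) =
      Pi.single (σ a, σ b) 1 - Pi.single (σ b, σ a) 1 := by
  have hlt := hab.lt
  ext ⟨c, d⟩
  obtain ⟨u, rfl⟩ := σ.surjective c
  obtain ⟨v, rfl⟩ := σ.surjective d
  simp only [map_sub, Pi.sub_apply, pairsMap_single, Pi.single_apply, mul_inv_rev,
    Equiv.Perm.mul_apply, Equiv.Perm.inv_def, Equiv.symm_apply_apply, Equiv.symm_swap,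
    swap_lt_swap_iff_of_covBy hab, Prod.mk.injEq, σ.injective.eq_iff]
  grind

lemma sub_eq_of_positionalMap_eq_comp_pairsMap {w : Fin n → ℚ}
    {R : (Fin n × Fin n → ℚ) →ₗ[ℚ] (Fin n → ℚ)} (hR : positionalMap n w = R ∘ₗ pairsMap n)
    {a b c d : Fin n} (hab : a ⋖ b) (hcd : c ≠ d) :
    w a - w b = R (Pi.single (c, d) 1 - Pi.single (d, c) 1) c := by
  obtain ⟨σ, rfl, rfl⟩ := exists_perm_apply_eq_and_apply_eq hab.ne hcd
  rw [← positionalMap_single_sub_single_mul_swap w σ, hR, LinearMap.comp_apply,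
    pairsMap_single_sub_single_mul_swap σ hab]

lemma Recoverable.exists_eq_smul_bordaWeight_add [Nontrivial (Fin n)] {w : Fin n → ℚ}
    (h : Recoverable (positionalMap n w) (pairsMap n)) :
    ∃ α β : ℚ, w = α • bordaWeight n + β • 1 := by
  obtain ⟨R, hR⟩ := h
  obtain ⟨c, d, hcd⟩ := exists_pair_ne (Fin n)
  obtain ⟨m, rfl⟩ := Nat.exists_eq_add_one.mpr c.pos
  set δ := R (Pi.single (c, d) 1 - Pi.single (d, c) 1) c
  have hgap (i : Fin m) : w i.castSucc - w i.succ = δ :=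
    sub_eq_of_positionalMap_eq_comp_pairsMap hR (by simp) hcd
  refine ⟨δ, w 0 - m * δ, funext fun j => ?_⟩
  rw [eq_sub_nsmul_of_castSucc_sub_succ_eq hgap j]
  simp only [Pi.add_apply, Pi.smul_apply, Pi.one_apply, bordaWeight, smul_eq_mul, nsmul_eq_mul]
  push_cast
  ring

lemma recoverable_positionalMap_smul_bordaWeight_add [Nontrivial (Fin n)] (α β : ℚ) :
    Recoverable (positionalMap n (α • bordaWeight n + β • 1)) (pairsMap n) := by
  rw [positionalMap_add, positionalMap_smul, positionalMap_smul]
  exact (recoverable_positionalMap_bordaWeight.smul α).add (recoverable_positionalMap_one.smul β)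

end Voting

/-- For `n ≥ 2` and a nontrivial weighting vector `w` (not a
multiple of the all-ones vector), `T_w` is recoverable from the pairs map `P`
if and only if `w = α·b + β·𝟙` for some rationals `α ≠ 0`, `β`, where
`b(j) = n − 1 − j` is the Borda weighting vector. -/
theorem recoverable_from_pairs_iff_borda (n : ℕ) (hn : 2 ≤ n)
    (w : Fin n → ℚ) (hw : ¬ ∃ β : ℚ, w = fun _ => β) :
    (∃ R : (Fin n × Fin n → ℚ) →ₗ[ℚ] (Fin n → ℚ),
        positionalMap n w = R ∘ₗ pairsMap n) ↔
      ∃ α β : ℚ, α ≠ 0 ∧ w = fun j : Fin n => α * ((n : ℚ) - 1 - ((j : ℕ) : ℚ)) + β := by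
  have : Nontrivial (Fin n) := Fin.nontrivial_iff_two_le.mpr hn
  have affine_eq (α β : ℚ) : (fun j : Fin n => α * ((n : ℚ) - 1 - ((j : ℕ) : ℚ)) + β) =
      α • bordaWeight n + β • 1 := by
    ext
    simp [bordaWeight]
  simp only [affine_eq]
  constructor
  · intro h
    obtain ⟨α, β, rfl⟩ := Recoverable.exists_eq_smul_bordaWeight_add h
    have hα : α ≠ 0 := by
      rintro rfl
      exact hw ⟨β, by ext; simp⟩
    exact ⟨α, β, hα, rfl⟩
  · rintro ⟨α, β, -, rfl⟩
    exact recoverable_positionalMap_smul_bordaWeight_add α β
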